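/- Let t ≥ 1 be an integer and let G be a finite K_{2,t}-free graph, i.e., every two distinct vertices of G have at most t − 1 common neighbors. Let D and k be nonnegative integers such that at most k vertices of G have degree less than D, and let C be a finite set of vertices with t·|C| < D − k. Then for every vertex u ∉ C with deg(u) ≥ D, there exists a neighbor w of u such that deg(w) ≥ D, w ∉ C, and w is not adjacent to any vertex of C. -/

import Mathlib

/-!
A vertex `c ≠ u` together with its neighbors accounts for at most `t` neighbors of `u`: the common
neighbors of `u` and `c`, of which there are at most `t - 1`, and possibly `c` itself. So at most
`k + t * |C| < D` neighbors of `u` have low degree or lie in the closed neighborhood of `C`, and any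
other neighbor of `u` is an escape.
-/

open scoped Finset

section

variable {V : Type*} {G : SimpleGraph V} {u : V} {C : Finset V} {t : ℕ∞}

/-- The closed neighborhood of a set `S` of vertices: `S` together with all vertices adjacent to a
vertex of `S`. For the set of cop positions, these are the vertices the robber must avoid. -/
def closedNeighborhood (G : SimpleGraph V) (S : Set V) : Set V :=
  ⋃ c ∈ S, insert c (G.neighborSet c)

theorem notMem_closedNeighborhood_iff {S : Set V} {w : V} :
    w ∉ closedNeighborhood G S ↔ w ∉ S ∧ ∀ c ∈ S, ¬ G.Adj w c := by
  simp only [closedNeighborhood, Set.mem_iUnion₂, Set.mem_insert_iff, SimpleGraph.mem_neighborSet,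
    G.adj_comm w]
  grind

theorem encard_neighborSet_inter_insert_neighborSet_le {c : V}
    (h : (G.commonNeighbors u c).encard < t) :
    (G.neighborSet u ∩ insert c (G.neighborSet c)).encard ≤ t :=
  calc (G.neighborSet u ∩ insert c (G.neighborSet c)).encard
      ≤ (insert c (G.commonNeighbors u c)).encard := by
        rw [SimpleGraph.commonNeighbors_eq]
        exact Set.encard_le_encard (by grind)
    _ ≤ (G.commonNeighbors u c).encard + 1 := Set.encard_insert_le _ _
    _ ≤ t := Order.add_one_le_of_lt h

theorem encard_neighborSet_inter_closedNeighborhood_le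
    (h : ∀ c ∈ C, (G.commonNeighbors u c).encard < t) :
    (G.neighborSet u ∩ closedNeighborhood G C).encard ≤ t * #C :=
  calc (G.neighborSet u ∩ closedNeighborhood G C).encard
      = (⋃ c ∈ C, G.neighborSet u ∩ insert c (G.neighborSet c)).encard := by
        simp only [closedNeighborhood, Set.inter_iUnion₂, Finset.mem_coe]
    _ ≤ ∑ c ∈ C, (G.neighborSet u ∩ insert c (G.neighborSet c)).encard :=
        C.set_encard_biUnion_le _
    _ ≤ #C • t := Finset.sum_le_card_nsmul _ _ _ fun c hc =>
        encard_neighborSet_inter_insert_neighborSet_le (h c hc)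
    _ = t * #C := by rw [nsmul_eq_mul, mul_comm]

theorem exists_adj_notMem_notMem_closedNeighborhood {L : Set V}
    (hcommon : ∀ c ∈ C, (G.commonNeighbors u c).encard < t)
    (hu : L.encard + t * #C < (G.neighborSet u).encard) :
    ∃ w, G.Adj u w ∧ w ∉ L ∧ w ∉ closedNeighborhood G C := by
  by_contra! hcover
  have hsub : G.neighborSet u ⊆ L ∪ G.neighborSet u ∩ closedNeighborhood G C := fun w huw =>
    or_iff_not_imp_left.mpr fun hwL => ⟨huw, hcover w huw hwL⟩
  refine hu.not_ge ?_
  calc (G.neighborSet u).encard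
      ≤ (L ∪ G.neighborSet u ∩ closedNeighborhood G C).encard := Set.encard_le_encard hsub
    _ ≤ L.encard + (G.neighborSet u ∩ closedNeighborhood G C).encard := Set.encard_union_le _ _
    _ ≤ L.encard + t * #C := by
        gcongr
        exact encard_neighborSet_inter_closedNeighborhood_le hcommon

theorem robber_escape_K2t_free_general {D k : ℕ∞}
    (hK2t : ∀ u v : V, u ≠ v → (G.commonNeighbors u v).encard < t)
    (hk : {v | (G.neighborSet v).encard < D}.encard ≤ k) (hC : t * #C + k < D)
    (huC : u ∉ C) (hu : D ≤ (G.neighborSet u).encard) :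
    ∃ w, G.Adj u w ∧ D ≤ (G.neighborSet w).encard ∧ w ∉ C ∧ ∀ c ∈ C, ¬ G.Adj w c := by
  have hcommon : ∀ c ∈ C, (G.commonNeighbors u c).encard < t := fun c hc =>
    hK2t u c (ne_of_mem_of_not_mem hc huC).symm
  have hfew : {v | (G.neighborSet v).encard < D}.encard + t * #C < (G.neighborSet u).encard :=
    calc {v | (G.neighborSet v).encard < D}.encard + t * #C
        ≤ k + t * #C := by gcongr
      _ = t * #C + k := add_comm _ _
      _ < D := hC
      _ ≤ (G.neighborSet u).encard := hu
  obtain ⟨w, huw, hwdeg, hwC⟩ := exists_adj_notMem_notMem_closedNeighborhood hcommon hfew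
  exact ⟨w, huw, not_lt.mp hwdeg, notMem_closedNeighborhood_iff.mp hwC⟩

theorem encard_neighborSet (v : V) [Fintype (G.neighborSet v)] :
    (G.neighborSet v).encard = G.degree v := by
  rw [← G.coe_neighborFinset, Set.encard_coe_eq_coe_finsetCard, G.card_neighborFinset_eq_degree]

theorem encard_commonNeighbors [DecidableEq V] (u v : V) [Fintype (G.neighborSet u)]
    [Fintype (G.neighborSet v)] :
    (G.commonNeighbors u v).encard = #(G.neighborFinset u ∩ G.neighborFinset v) := by
  rw [G.commonNeighbors_eq, ← G.coe_neighborFinset u, ← G.coe_neighborFinset v,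
    ← Finset.coe_inter, Set.encard_coe_eq_coe_finsetCard]

theorem encard_setOf_encard_neighborSet_lt [Fintype V] [DecidableRel G.Adj] (D : ℕ) :
    {v | (G.neighborSet v).encard < D}.encard = #{v | G.degree v < D} := by
  simp only [encard_neighborSet, Nat.cast_lt, ← Set.encard_coe_eq_coe_finsetCard,
    Finset.coe_filter_univ]

end

/-- In a `K_{2,t}`-free graph (every two distinct vertices have at most
`t - 1` common neighbors), if at most `k` vertices have degree less than `D` and `C` is a
set of vertices with `t·|C| < D - k`, then every vertex `u ∉ C` of degree at least `D` has
a neighbor `w` of degree at least `D` with `w ∉ C` that is not adjacent to any vertex of `C`. -/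
theorem robber_escape_K2t_free {V : Type*} [Fintype V] [DecidableEq V]
    (G : SimpleGraph V) [DecidableRel G.Adj] (t : ℕ) (ht : 1 ≤ t)
    (hK2t : ∀ u v : V, u ≠ v → (G.neighborFinset u ∩ G.neighborFinset v).card ≤ t - 1)
    (D k : ℕ)
    (hk : (Finset.univ.filter fun v : V => G.degree v < D).card ≤ k)
    (C : Finset V) (hC : (t : ℤ) * C.card < (D : ℤ) - k) :
    ∀ u : V, u ∉ C → D ≤ G.degree u →
      ∃ w : V, G.Adj u w ∧ D ≤ G.degree w ∧ w ∉ C ∧ ∀ c ∈ C, ¬ G.Adj w c := by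
  intro u huC hu
  have hcommon (x y : V) (hxy : x ≠ y) : (G.commonNeighbors x y).encard < t := by
    rw [encard_commonNeighbors]
    exact_mod_cast Nat.lt_of_le_pred ht (hK2t x y hxy)
  have hlow : {v | (G.neighborSet v).encard < D}.encard ≤ k := by
    rw [encard_setOf_encard_neighborSet_lt]
    exact_mod_cast hk
  have hcount : (t : ℕ∞) * #C + k < D := by
    exact_mod_cast lt_sub_iff_add_lt.mp hC
  have hdeg : (D : ℕ∞) ≤ (G.neighborSet u).encard := by
    rw [encard_neighborSet]
    exact_mod_cast hu
  simpa only [encard_neighborSet, Nat.cast_le] using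
    robber_escape_K2t_free_general hcommon hlow hcount huC hdeg
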